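/- Let u_⋆(p) = p/|p| be the planar vortex on the punctured unit disk D₁ \ {0} ⊂ ℝ². Then lim_{s→1⁻} (1-s)² [u_⋆]²_{H^{(1+s)/2}(D₁)} = 2π², where the Gagliardo seminorm is [u]²_{H^α(D₁)} = ∬_{D₁×D₁} |u(x)-u(y)|²/|x-y|^{2+2α} dx dy. -/

import Mathlib

open MeasureTheory Set Metric Filter
open scoped ENNReal

/-- The standard planar vortex u_⋆(p) = p/|p|. -/
noncomputable def vortex2 (x : EuclideanSpace ℝ (Fin 2)) : EuclideanSpace ℝ (Fin 2) :=
  ‖x‖⁻¹ • x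

open Module (finrank)
open scoped Topology InnerProductSpace

/-! Scaling and rotating a point `x` of the plane to `1`, that is substituting `y = x * (1 + h)`,
turns the energy of the vortex on the disk of radius `R` into the integral of `|x| ^ (-1 - s)`
against the integral of the kernel `|1 - u⋆ (1 + h)| ^ 2 / |h| ^ (3 + s)` over a region of `h` that
contains the unit disk for `|x| < R / 2`. Near `h = 0` the numerator is `(Im h) ^ 2 + O(|h| ^ 3)`,
so the integral in `h` is `π / (1 - s) + O(1)`, while the radial integral in `x` equals
`2 * π * R ^ (1 - s) / (1 - s)`. The product of these two simple poles is the limit `2 * π ^ 2`,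
whatever the radius. -/

local notation "u⋆" => NormedSpace.normalize

section RadialIntegrals

variable {E : Type*} [NormedAddCommGroup E] [NormedSpace ℝ E] [Nontrivial E]
  [FiniteDimensional ℝ E] [MeasurableSpace E] [BorelSpace E] (μ : Measure E) [μ.IsAddHaarMeasure]

lemma lintegral_fun_norm_addHaar {f : ℝ → ℝ≥0∞} (hf : Measurable f) :
    ∫⁻ x, f ‖x‖ ∂μ = finrank ℝ E * μ (ball 0 1) *
      ∫⁻ r in Ioi (0 : ℝ), ENNReal.ofReal (r ^ (finrank ℝ E - 1)) * f r :=
  calc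
    ∫⁻ x, f ‖x‖ ∂μ = ∫⁻ x : ({0}ᶜ : Set E), f ‖x.1‖ ∂(μ.comap (↑)) := by
      rw [lintegral_subtype_comap (measurableSet_singleton _).compl fun x ↦ f ‖x‖,
        restrict_compl_singleton]
    _ = ∫⁻ x, f x.2 ∂μ.toSphere.prod (.volumeIoiPow (finrank ℝ E - 1)) := by
      simpa using μ.measurePreserving_homeomorphUnitSphereProd.lintegral_comp_emb
        (Homeomorph.measurableEmbedding _) (f ∘ Subtype.val ∘ Prod.snd)
    _ = μ.toSphere univ * ∫⁻ r : Ioi (0 : ℝ), f r ∂.volumeIoiPow (finrank ℝ E - 1) := by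
      simpa using lintegral_prod_mul (μ := μ.toSphere)
        (ν := .volumeIoiPow (finrank ℝ E - 1)) (f := 1) (g := fun r ↦ f r)
        aemeasurable_one (by fun_prop)
    _ = _ := by
      rw [μ.toSphere_apply_univ, Measure.volumeIoiPow,
        lintegral_withDensity_eq_lintegral_mul _ (by fun_prop) (by fun_prop)]
      exact congrArg _ (lintegral_subtype_comap measurableSet_Ioi
        fun r ↦ ENNReal.ofReal (r ^ (finrank ℝ E - 1)) * f r)

lemma setLIntegral_preimage_norm_addHaar {f : ℝ → ℝ≥0∞} (hf : Measurable f) {S : Set ℝ}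
    (hS : MeasurableSet S) :
    ∫⁻ x in norm ⁻¹' S, f ‖x‖ ∂μ = finrank ℝ E * μ (ball 0 1) *
      ∫⁻ r in S ∩ Ioi (0 : ℝ), ENNReal.ofReal (r ^ (finrank ℝ E - 1)) * f r := by
  rw [← lintegral_indicator (measurable_norm hS), ← setLIntegral_indicator hS]
  simp_rw [indicator_mul_right]
  exact lintegral_fun_norm_addHaar μ (hf.indicator hS)

lemma setLIntegral_preimage_norm_rpow_addHaar (a : ℝ) {S : Set ℝ} (hS : MeasurableSet S) :
    ∫⁻ x in norm ⁻¹' S, ENNReal.ofReal (‖x‖ ^ a) ∂μ = finrank ℝ E * μ (ball 0 1) *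
      ∫⁻ r in S ∩ Ioi (0 : ℝ), ENNReal.ofReal (r ^ (a + finrank ℝ E - 1)) := by
  rw [setLIntegral_preimage_norm_addHaar μ (f := fun r ↦ ENNReal.ofReal (r ^ a)) (by fun_prop) hS]
  congr 1
  refine setLIntegral_congr_fun (hS.inter measurableSet_Ioi) fun r ⟨_, hr⟩ ↦ ?_
  have hr : 0 < r := hr
  rw [← ENNReal.ofReal_mul (by positivity), ← Real.rpow_natCast, ← Real.rpow_add hr,
    Nat.cast_pred Module.finrank_pos]
  ring_nf

lemma lintegral_Ioo_rpow {a R : ℝ} (ha : -1 < a) (hR : 0 ≤ R) :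
    ∫⁻ r in Ioo 0 R, ENNReal.ofReal (r ^ a) = ENNReal.ofReal (R ^ (a + 1) / (a + 1)) := by
  have hint : IntegrableOn (· ^ a) (Ioo 0 R) := by
    rw [← intervalIntegrable_iff_integrableOn_Ioo_of_le hR]
    exact intervalIntegral.intervalIntegrable_rpow' ha
  rw [← ofReal_integral_eq_lintegral_ofReal hint, ← integral_Ioc_eq_integral_Ioo,
    ← intervalIntegral.integral_of_le hR, integral_rpow (.inl ha),
    Real.zero_rpow (by linarith), sub_zero]
  filter_upwards [ae_restrict_mem measurableSet_Ioo] with r hr using Real.rpow_nonneg hr.1.le _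

lemma lintegral_Ici_rpow {a R : ℝ} (ha : a < -1) (hR : 0 < R) :
    ∫⁻ r in Ici R, ENNReal.ofReal (r ^ a) = ENNReal.ofReal (-R ^ (a + 1) / (a + 1)) := by
  rw [← setLIntegral_congr Ioi_ae_eq_Ici,
    ← ofReal_integral_eq_lintegral_ofReal (integrableOn_Ioi_rpow_of_lt ha hR),
    integral_Ioi_rpow_of_lt ha hR]
  filter_upwards [ae_restrict_mem measurableSet_Ioi] with r hr
  exact Real.rpow_nonneg (hR.trans hr).le _

lemma setLIntegral_ball_norm_rpow_addHaar {a R : ℝ} (ha : -(finrank ℝ E : ℝ) < a) (hR : 0 ≤ R) :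
    ∫⁻ x in ball (0 : E) R, ENNReal.ofReal (‖x‖ ^ a) ∂μ = finrank ℝ E * μ (ball 0 1) *
      ENNReal.ofReal (R ^ (a + finrank ℝ E) / (a + finrank ℝ E)) := by
  have hball : ball (0 : E) R = norm ⁻¹' Iio R := by ext; simp
  rw [hball, setLIntegral_preimage_norm_rpow_addHaar μ a measurableSet_Iio, Iio_inter_Ioi,
    lintegral_Ioo_rpow (by linarith) hR, sub_add_cancel]

lemma setLIntegral_compl_ball_norm_rpow_addHaar {a R : ℝ} (ha : a < -(finrank ℝ E : ℝ))
    (hR : 0 < R) :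
    ∫⁻ x in (ball (0 : E) R)ᶜ, ENNReal.ofReal (‖x‖ ^ a) ∂μ = finrank ℝ E * μ (ball 0 1) *
      ENNReal.ofReal (-R ^ (a + finrank ℝ E) / (a + finrank ℝ E)) := by
  have hcompl : (ball (0 : E) R)ᶜ = norm ⁻¹' Ici R := by ext; simp
  rw [hcompl, setLIntegral_preimage_norm_rpow_addHaar μ a measurableSet_Ici,
    inter_eq_left.2 (Ici_subset_Ioi.2 hR), lintegral_Ici_rpow (by linarith) hR, sub_add_cancel]

end RadialIntegrals

section PlanarIntegrals

variable {a R : ℝ}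

lemma finrank_mul_volume_complex_unit_ball :
    (finrank ℝ ℂ : ℝ≥0∞) * volume (ball (0 : ℂ) 1) = ENNReal.ofReal (2 * Real.pi) := by
  rw [Complex.finrank_real_complex, Complex.volume_ball, ENNReal.ofReal_mul zero_le_two]
  simp [← ENNReal.ofReal_coe_nnreal]

lemma setLIntegral_ball_norm_rpow (ha : -2 < a) (hR : 0 ≤ R) :
    ∫⁻ z in ball (0 : ℂ) R, ENNReal.ofReal (‖z‖ ^ a) =
      ENNReal.ofReal (2 * Real.pi * (R ^ (a + 2) / (a + 2))) := by
  rw [setLIntegral_ball_norm_rpow_addHaar volume (by simpa using ha) hR,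
    finrank_mul_volume_complex_unit_ball, ← ENNReal.ofReal_mul (by positivity),
    Complex.finrank_real_complex, Nat.cast_ofNat]

lemma setLIntegral_compl_ball_norm_rpow (ha : a < -2) (hR : 0 < R) :
    ∫⁻ z in (ball (0 : ℂ) R)ᶜ, ENNReal.ofReal (‖z‖ ^ a) =
      ENNReal.ofReal (2 * Real.pi * (-R ^ (a + 2) / (a + 2))) := by
  rw [setLIntegral_compl_ball_norm_rpow_addHaar volume (by simpa using ha) hR,
    finrank_mul_volume_complex_unit_ball, ← ENNReal.ofReal_mul (by positivity),
    Complex.finrank_real_complex, Nat.cast_ofNat]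

lemma lintegral_comp_linearMap_addHaar {E : Type*} [NormedAddCommGroup E] [NormedSpace ℝ E]
    [FiniteDimensional ℝ E] [MeasurableSpace E] [BorelSpace E] (μ : Measure E)
    [μ.IsAddHaarMeasure] {L : E →ₗ[ℝ] E} (hL : LinearMap.det L ≠ 0) (f : E → ℝ≥0∞) :
    ∫⁻ x, f (L x) ∂μ = ENNReal.ofReal |(LinearMap.det L)⁻¹| * ∫⁻ x, f x ∂μ := by
  have hemb : MeasurableEmbedding L :=
    (LinearMap.equivOfDetNeZero L hL).toContinuousLinearEquiv.toHomeomorph.measurableEmbedding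
  rw [← hemb.lintegral_map, Measure.map_linearMap_addHaar_eq_smul_addHaar μ hL,
    lintegral_smul_measure, smul_eq_mul]

lemma lintegral_eq_norm_sq_mul_lintegral_comp_mul_left {x : ℂ} (hx : x ≠ 0) (f : ℂ → ℝ≥0∞) :
    ∫⁻ y, f y = ENNReal.ofReal (‖x‖ ^ 2) * ∫⁻ w, f (x * w) := by
  have hdet : LinearMap.det (LinearMap.mul ℝ ℂ x) = ‖x‖ ^ 2 := by
    rw [← Complex.normSq_eq_norm_sq, ← Algebra.norm_complex_apply, Algebra.norm_apply]
    rfl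
  have hpos : 0 < ‖x‖ ^ 2 := by positivity
  have hsubst := lintegral_comp_linearMap_addHaar volume (hdet ▸ hpos.ne') f
  simp only [LinearMap.mul_apply', hdet, abs_of_pos (inv_pos.2 hpos)] at hsubst
  rw [hsubst, ← mul_assoc, ← ENNReal.ofReal_mul hpos.le, mul_inv_cancel₀ hpos.ne',
    ENNReal.ofReal_one, one_mul]

-- Multiplication by `I` swaps `z.re ^ 2` and `z.im ^ 2`, which add up to `‖z‖ ^ 2`.
lemma two_mul_lintegral_im_sq_mul_fun_norm {f : ℝ → ℝ≥0∞} (hf : Measurable f) :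
    2 * ∫⁻ z : ℂ, ENNReal.ofReal (z.im ^ 2) * f ‖z‖ =
      ∫⁻ z : ℂ, ENNReal.ofReal (‖z‖ ^ 2) * f ‖z‖ := by
  have hrot : ∫⁻ z : ℂ, ENNReal.ofReal (z.im ^ 2) * f ‖z‖ =
      ∫⁻ z : ℂ, ENNReal.ofReal (z.re ^ 2) * f ‖z‖ := by
    simpa using lintegral_eq_norm_sq_mul_lintegral_comp_mul_left Complex.I_ne_zero
      fun z ↦ ENNReal.ofReal (z.im ^ 2) * f ‖z‖
  calc
    2 * ∫⁻ z : ℂ, ENNReal.ofReal (z.im ^ 2) * f ‖z‖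
      = (∫⁻ z : ℂ, ENNReal.ofReal (z.re ^ 2) * f ‖z‖) +
          ∫⁻ z : ℂ, ENNReal.ofReal (z.im ^ 2) * f ‖z‖ := by rw [two_mul, ← hrot]
    _ = ∫⁻ z : ℂ, ENNReal.ofReal (‖z‖ ^ 2) * f ‖z‖ := by
      rw [← lintegral_add_left (by fun_prop)]
      refine lintegral_congr fun z ↦ ?_
      rw [← add_mul, ← ENNReal.ofReal_add (by positivity) (by positivity), Complex.sq_norm,
        Complex.normSq_apply, sq, sq]

lemma two_mul_setLIntegral_preimage_norm_im_sq_mul {f : ℝ → ℝ≥0∞} (hf : Measurable f)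
    {S : Set ℝ} (hS : MeasurableSet S) :
    2 * ∫⁻ z : ℂ in norm ⁻¹' S, ENNReal.ofReal (z.im ^ 2) * f ‖z‖ =
      ∫⁻ z : ℂ in norm ⁻¹' S, ENNReal.ofReal (‖z‖ ^ 2) * f ‖z‖ := by
  simp_rw [← lintegral_indicator (measurable_norm hS), indicator_mul_right]
  exact two_mul_lintegral_im_sq_mul_fun_norm (hf.indicator hS)

lemma setLIntegral_ball_im_sq_mul_norm_rpow (ha : -4 < a) (hR : 0 ≤ R) :
    ∫⁻ z in ball (0 : ℂ) R, ENNReal.ofReal (z.im ^ 2 * ‖z‖ ^ a) =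
      ENNReal.ofReal (Real.pi * (R ^ (a + 4) / (a + 4))) := by
  have hball : ball (0 : ℂ) R = norm ⁻¹' Iio R := by ext; simp
  have hhalf : 2 * ∫⁻ z in ball (0 : ℂ) R, ENNReal.ofReal (z.im ^ 2 * ‖z‖ ^ a) =
      ∫⁻ z in ball (0 : ℂ) R, ENNReal.ofReal (‖z‖ ^ (a + 2)) := by
    simp_rw [hball, ENNReal.ofReal_mul (sq_nonneg _)]
    rw [two_mul_setLIntegral_preimage_norm_im_sq_mul (f := fun r ↦ ENNReal.ofReal (r ^ a))
      (by fun_prop) measurableSet_Iio]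
    refine lintegral_congr_ae (ae_restrict_of_ae ?_)
    filter_upwards [Measure.ae_ne volume 0] with z hz
    rw [← ENNReal.ofReal_mul (sq_nonneg _), mul_comm,
      ← Real.rpow_add_natCast (norm_ne_zero_iff.2 hz), Nat.cast_ofNat]
  rw [← ENNReal.mul_right_inj two_ne_zero ENNReal.ofNat_ne_top, hhalf,
    setLIntegral_ball_norm_rpow (by linarith) hR, ← ENNReal.ofReal_ofNat 2,
    ← ENNReal.ofReal_mul zero_le_two]
  ring_nf

end PlanarIntegrals

section Normalize

lemma normalize_mul_eq_mul_normalize {𝕜 : Type*} [NormedDivisionRing 𝕜] [NormedAlgebra ℝ 𝕜]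
    (x y : 𝕜) : u⋆ (x * y) = u⋆ x * u⋆ y := by
  simp only [NormedSpace.normalize, norm_mul, mul_inv, smul_mul_smul_comm]

variable {E : Type*} [NormedAddCommGroup E] [InnerProductSpace ℝ E] {e h x : E}

lemma norm_normalize_le_one (x : E) : ‖u⋆ x‖ ≤ 1 := by
  rcases eq_or_ne x 0 with rfl | hx
  · simp
  · exact (NormedSpace.norm_normalize hx).le

lemma norm_sub_normalize_sq (he : ‖e‖ = 1) (hx : x ≠ 0) :
    ‖e - u⋆ x‖ ^ 2 = 2 - 2 * (⟪e, x⟫_ℝ / ‖x‖) := by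
  rw [norm_sub_sq_real, he, NormedSpace.norm_normalize hx, NormedSpace.normalize,
    real_inner_smul_right]
  ring

lemma norm_sub_normalize_le_two (he : ‖e‖ = 1) (x : E) : ‖e - u⋆ x‖ ≤ 2 := by
  linarith [norm_sub_le e (u⋆ x), norm_normalize_le_one x]

lemma abs_norm_sub_normalize_add_sq_sub_le_of_norm_le_half (he : ‖e‖ = 1)
    (hh : ‖h‖ ≤ 1 / 2) :
    |‖e - u⋆ (e + h)‖ ^ 2 - (‖h‖ ^ 2 - ⟪e, h⟫_ℝ ^ 2)| ≤ 12 * ‖h‖ ^ 3 := by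
  set a := ⟪e, h⟫_ℝ
  set m := ‖e + h‖
  have ha : |a| ≤ ‖h‖ := by simpa [he] using abs_real_inner_le_norm e h
  have hm : |m - 1| ≤ ‖h‖ := by simpa [he] using abs_norm_sub_norm_le (e + h) e
  have hm_sq : m ^ 2 = 1 + 2 * a + ‖h‖ ^ 2 := by rw [norm_add_sq_real, he, one_pow]
  rw [abs_le] at ha hm
  have hm_pos : 0 < m := by linarith
  have hident : ‖e - u⋆ (e + h)‖ ^ 2 * (m * (m + 1 + a)) = 2 * (‖h‖ ^ 2 - a ^ 2) := by
    have hinner : ⟪e, e + h⟫_ℝ = 1 + a := by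
      rw [inner_add_right, real_inner_self_eq_norm_sq, he, one_pow]
    rw [norm_sub_normalize_sq he (norm_pos_iff.1 hm_pos), hinner]
    change (2 - 2 * ((1 + a) / m)) * _ = _
    field_simp
    linear_combination hm_sq
  have hden_ge : 1 / 2 ≤ m * (m + 1 + a) := by nlinarith
  have hden_near : |2 - m * (m + 1 + a)| ≤ 6 * ‖h‖ := by
    rw [abs_le]; constructor <;> nlinarith
  have hperp_nonneg : 0 ≤ ‖h‖ ^ 2 - a ^ 2 := by nlinarith
  set d := ‖e - u⋆ (e + h)‖ ^ 2 - (‖h‖ ^ 2 - a ^ 2) with hd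
  calc
    |d| ≤ 2 * (|d| * |m * (m + 1 + a)|) := by
      rw [abs_of_nonneg (by linarith : 0 ≤ m * (m + 1 + a))]
      nlinarith [abs_nonneg d]
    _ = 2 * ((‖h‖ ^ 2 - a ^ 2) * |2 - m * (m + 1 + a)|) := by
      rw [← abs_mul, hd, sub_mul, hident, ← abs_of_nonneg hperp_nonneg, ← abs_mul,
        abs_of_nonneg hperp_nonneg]
      ring_nf
    _ ≤ 2 * (‖h‖ ^ 2 * (6 * ‖h‖)) := by
      gcongr
      linarith [sq_nonneg a]
    _ = 12 * ‖h‖ ^ 3 := by ring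

lemma abs_norm_sub_normalize_add_sq_sub_le (he : ‖e‖ = 1) (h : E) :
    |‖e - u⋆ (e + h)‖ ^ 2 - (‖h‖ ^ 2 - ⟪e, h⟫_ℝ ^ 2)| ≤ 32 * ‖h‖ ^ 3 := by
  rcases le_total ‖h‖ (1 / 2) with hh | hh
  · have := pow_nonneg (norm_nonneg h) 3
    linarith [abs_norm_sub_normalize_add_sq_sub_le_of_norm_le_half he hh]
  have ha : ⟪e, h⟫_ℝ ^ 2 ≤ ‖h‖ ^ 2 := by
    rw [sq_le_sq, abs_norm]
    simpa [he] using abs_real_inner_le_norm e h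
  have hg : ‖e - u⋆ (e + h)‖ ^ 2 ≤ 2 ^ 2 := by
    gcongr
    exact norm_sub_normalize_le_two he _
  have hcube : (1 / 2) ^ 3 ≤ ‖h‖ ^ 3 := by gcongr
  have hsq : ‖h‖ ^ 2 * (1 / 2) ≤ ‖h‖ ^ 2 * ‖h‖ := by gcongr
  rw [abs_le]
  constructor <;> nlinarith [sq_nonneg ‖e - u⋆ (e + h)‖, sq_nonneg ⟪e, h⟫_ℝ]

lemma abs_norm_one_sub_normalize_one_add_sq_sub_im_sq_le (h : ℂ) :
    |‖1 - u⋆ (1 + h)‖ ^ 2 - h.im ^ 2| ≤ 32 * ‖h‖ ^ 3 := by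
  have him : ‖h‖ ^ 2 - ⟪(1 : ℂ), h⟫_ℝ ^ 2 = h.im ^ 2 := by
    rw [Complex.sq_norm, Complex.normSq_apply, Complex.inner]
    simp only [map_one, mul_one]
    ring
  exact him ▸ abs_norm_sub_normalize_add_sq_sub_le norm_one h

end Normalize

section Gagliardo

/-- The squared Gagliardo seminorm of `u` on `Ω`, with kernel `1 / |x - y| ^ q`. On a
`d`-dimensional space it is `[u]²_{H^α(Ω)}` for `q = d + 2 * α`. -/
noncomputable def gagliardoEnergy {E F : Type*} [PseudoMetricSpace E] [MeasureSpace E]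
    [SeminormedAddCommGroup F] (q : ℝ) (u : E → F) (Ω : Set E) : ℝ≥0∞ :=
  ∫⁻ x in Ω, ∫⁻ y in Ω, ENNReal.ofReal (‖u x - u y‖ ^ 2 / dist x y ^ q)

lemma gagliardoEnergy_normalize_ball_congr {E F : Type*} [NormedAddCommGroup E]
    [InnerProductSpace ℝ E] [FiniteDimensional ℝ E] [MeasurableSpace E] [BorelSpace E]
    [NormedAddCommGroup F] [InnerProductSpace ℝ F] [FiniteDimensional ℝ F] [MeasurableSpace F]
    [BorelSpace F] (φ : E ≃ₗᵢ[ℝ] F) (q R : ℝ) :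
    gagliardoEnergy q u⋆ (ball (0 : F) R) = gagliardoEnergy q u⋆ (ball (0 : E) R) := by
  have hpres := φ.measurePreserving
  have hemb : MeasurableEmbedding φ := φ.toHomeomorph.measurableEmbedding
  have hball : φ ⁻¹' ball 0 R = ball 0 R := by ext; simp
  have hcomm (x : E) : u⋆ (φ x) = φ (u⋆ x) := by
    simp only [NormedSpace.normalize, φ.norm_map, map_smul]
  simp only [gagliardoEnergy, ← hpres.setLIntegral_comp_preimage_emb hemb, hball, hcomm,
    ← map_sub, φ.norm_map, φ.dist_map]

end Gagliardo

section VortexKernel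

/-- The Gagliardo integrand of the planar vortex at the pair of points `1` and `1 + h`. -/
noncomputable def vortexKernel (q : ℝ) (h : ℂ) : ℝ≥0∞ :=
  ENNReal.ofReal (‖1 - u⋆ (1 + h)‖ ^ 2 / ‖h‖ ^ q)

variable {q : ℝ} {x : ℂ}

@[fun_prop]
lemma measurable_vortexKernel (q : ℝ) : Measurable (vortexKernel q) := by
  unfold vortexKernel NormedSpace.normalize
  fun_prop

lemma norm_sq_mul_gagliardo_integrand_mul_one_add (hx : x ≠ 0) (q : ℝ) (h : ℂ) :
    ENNReal.ofReal (‖x‖ ^ 2) *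
        ENNReal.ofReal (‖u⋆ x - u⋆ (x * (1 + h))‖ ^ 2 / dist x (x * (1 + h)) ^ q) =
      ENNReal.ofReal (‖x‖ ^ (2 - q)) * vortexKernel q h := by
  have hpos : 0 < ‖x‖ := norm_pos_iff.2 hx
  have hnum : ‖u⋆ x - u⋆ (x * (1 + h))‖ = ‖1 - u⋆ (1 + h)‖ := by
    rw [normalize_mul_eq_mul_normalize, ← mul_one_sub, norm_mul, NormedSpace.norm_normalize hx,
      one_mul]
  have hdist : dist x (x * (1 + h)) = ‖x‖ * ‖h‖ := by
    rw [mul_one_add, dist_self_add_right, norm_mul]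
  rw [vortexKernel, ← ENNReal.ofReal_mul (by positivity), ← ENNReal.ofReal_mul (by positivity),
    hnum, hdist, Real.mul_rpow (by positivity) (by positivity), Real.rpow_sub hpos,
    Real.rpow_two]
  congr 1
  ring

lemma setLIntegral_ball_gagliardo_integrand (hx : x ≠ 0) (q R : ℝ) :
    ∫⁻ y in ball 0 R, ENNReal.ofReal (‖u⋆ x - u⋆ y‖ ^ 2 / dist x y ^ q) =
      ENNReal.ofReal (‖x‖ ^ (2 - q)) *
        ∫⁻ h in {h : ℂ | x * (1 + h) ∈ ball 0 R}, vortexKernel q h := by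
  have hS : MeasurableSet {h : ℂ | x * (1 + h) ∈ ball 0 R} :=
    measurableSet_ball.preimage (by fun_prop)
  rw [← lintegral_indicator measurableSet_ball, ← lintegral_indicator hS,
    lintegral_eq_norm_sq_mul_lintegral_comp_mul_left hx, ← lintegral_add_left_eq_self _ (1 : ℂ),
    ← lintegral_const_mul' _ _ ENNReal.ofReal_ne_top,
    ← lintegral_const_mul' _ _ ENNReal.ofReal_ne_top]
  refine lintegral_congr fun h ↦ ?_
  by_cases hh : x * (1 + h) ∈ ball 0 R
  · rw [indicator_of_mem hh, indicator_of_mem (by exact hh)]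
    exact norm_sq_mul_gagliardo_integrand_mul_one_add hx q h
  · rw [indicator_of_notMem hh, indicator_of_notMem (by exact hh)]
    simp only [mul_zero]

lemma abs_norm_one_sub_normalize_sq_div_rpow_sub_le (hq : 3 < q) (h : ℂ) :
    |‖1 - u⋆ (1 + h)‖ ^ 2 / ‖h‖ ^ q - h.im ^ 2 * ‖h‖ ^ (-q)| ≤ 32 * ‖h‖ ^ (3 - q) := by
  rcases eq_or_ne h 0 with rfl | hh
  · simp [Real.zero_rpow (by linarith : q ≠ 0), Real.rpow_nonneg]
  have hpos : 0 < ‖h‖ := norm_pos_iff.2 hh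
  have hsplit : ‖h‖ ^ (3 - q) = ‖h‖ ^ 3 * ‖h‖ ^ (-q) := by
    rw [sub_eq_add_neg, Real.rpow_add hpos, Real.rpow_ofNat]
  rw [div_eq_mul_inv, ← Real.rpow_neg hpos.le, ← sub_mul, abs_mul,
    abs_of_nonneg (by positivity : 0 ≤ ‖h‖ ^ (-q)), hsplit, ← mul_assoc]
  gcongr
  exact abs_norm_one_sub_normalize_one_add_sq_sub_im_sq_le h

lemma vortexKernel_le_im_sq_mul_rpow_add (hq : 3 < q) (h : ℂ) :
    vortexKernel q h ≤
      ENNReal.ofReal (h.im ^ 2 * ‖h‖ ^ (-q)) + ENNReal.ofReal (32 * ‖h‖ ^ (3 - q)) := by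
  rw [vortexKernel, ← ENNReal.ofReal_add (by positivity) (by positivity)]
  gcongr
  linarith [(abs_le.1 (abs_norm_one_sub_normalize_sq_div_rpow_sub_le hq h)).2]

lemma im_sq_mul_rpow_le_vortexKernel_add (hq : 3 < q) (h : ℂ) :
    ENNReal.ofReal (h.im ^ 2 * ‖h‖ ^ (-q)) ≤
      vortexKernel q h + ENNReal.ofReal (32 * ‖h‖ ^ (3 - q)) := by
  rw [vortexKernel, ← ENNReal.ofReal_add (by positivity) (by positivity)]
  gcongr
  linarith [(abs_le.1 (abs_norm_one_sub_normalize_sq_div_rpow_sub_le hq h)).1]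

lemma vortexKernel_le_four_mul_rpow (q : ℝ) (h : ℂ) :
    vortexKernel q h ≤ ENNReal.ofReal (4 * ‖h‖ ^ (-q)) := by
  rw [vortexKernel, Real.rpow_neg (norm_nonneg h), ← div_eq_mul_inv,
    show (4 : ℝ) = 2 ^ 2 by norm_num]
  gcongr
  exact norm_sub_normalize_le_two norm_one _

lemma setLIntegral_unit_ball_im_sq_mul_norm_rpow_neg (hq : q < 4) :
    ∫⁻ h : ℂ in ball 0 1, ENNReal.ofReal (h.im ^ 2 * ‖h‖ ^ (-q)) =
      ENNReal.ofReal (Real.pi / (4 - q)) := by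
  rw [setLIntegral_ball_im_sq_mul_norm_rpow (by linarith) zero_le_one, Real.one_rpow, mul_one_div,
    neg_add_eq_sub]

lemma setLIntegral_unit_ball_const_mul_norm_rpow_le {C : ℝ} (hC : 0 ≤ C) (hq : q ≤ 4) :
    ∫⁻ h : ℂ in ball 0 1, ENNReal.ofReal (C * ‖h‖ ^ (3 - q)) ≤
      ENNReal.ofReal (2 * Real.pi * C) := by
  simp_rw [ENNReal.ofReal_mul hC]
  rw [lintegral_const_mul _ (by fun_prop), setLIntegral_ball_norm_rpow (by linarith) zero_le_one,
    ← ENNReal.ofReal_mul hC, Real.one_rpow, ← mul_assoc, mul_comm C]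
  have hfrac : 1 / (3 - q + 2) ≤ 1 := by
    rw [div_le_one (by linarith)]
    linarith
  exact ENNReal.ofReal_le_ofReal (mul_le_of_le_one_right (by positivity) hfrac)

lemma setLIntegral_compl_unit_ball_const_mul_norm_rpow_neg_le {C : ℝ} (hC : 0 ≤ C) (hq : 3 ≤ q) :
    ∫⁻ h : ℂ in (ball 0 1)ᶜ, ENNReal.ofReal (C * ‖h‖ ^ (-q)) ≤
      ENNReal.ofReal (2 * Real.pi * C) := by
  simp_rw [ENNReal.ofReal_mul hC]
  rw [lintegral_const_mul _ (by fun_prop), setLIntegral_compl_ball_norm_rpow (by linarith) one_pos,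
    ← ENNReal.ofReal_mul hC, Real.one_rpow, ← mul_assoc, mul_comm C]
  have hfrac : -1 / (-q + 2) ≤ 1 := by
    rw [div_le_one_of_neg (by linarith)]
    linarith
  exact ENNReal.ofReal_le_ofReal (mul_le_of_le_one_right (by positivity) hfrac)

lemma lintegral_vortexKernel_le (hq : q ∈ Ioo 3 4) :
    ∫⁻ h, vortexKernel q h ≤ ENNReal.ofReal (Real.pi / (4 - q) + 72 * Real.pi) := by
  have h4 : 0 < 4 - q := by linarith [hq.2]
  have hnear : ∫⁻ h in ball 0 1, vortexKernel q h ≤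
      ENNReal.ofReal (Real.pi / (4 - q)) + ENNReal.ofReal (2 * Real.pi * 32) := by
    refine (lintegral_mono (vortexKernel_le_im_sq_mul_rpow_add hq.1)).trans ?_
    rw [lintegral_add_left (by fun_prop), setLIntegral_unit_ball_im_sq_mul_norm_rpow_neg hq.2]
    gcongr
    exact setLIntegral_unit_ball_const_mul_norm_rpow_le (by norm_num) hq.2.le
  have hfar : ∫⁻ h in (ball 0 1)ᶜ, vortexKernel q h ≤ ENNReal.ofReal (2 * Real.pi * 4) :=
    (lintegral_mono (vortexKernel_le_four_mul_rpow q)).trans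
      (setLIntegral_compl_unit_ball_const_mul_norm_rpow_neg_le zero_le_four hq.1.le)
  rw [← lintegral_add_compl _ measurableSet_ball]
  refine (add_le_add hnear hfar).trans_eq ?_
  rw [← ENNReal.ofReal_add (by positivity) (by positivity),
    ← ENNReal.ofReal_add (by positivity) (by positivity)]
  ring_nf

lemma le_setLIntegral_unit_ball_vortexKernel (hq : q ∈ Ioo 3 4) :
    ENNReal.ofReal (Real.pi / (4 - q) - 64 * Real.pi) ≤ ∫⁻ h in ball 0 1, vortexKernel q h := by
  rw [ENNReal.ofReal_sub _ (by positivity), tsub_le_iff_right,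
    ← setLIntegral_unit_ball_im_sq_mul_norm_rpow_neg hq.2]
  refine (lintegral_mono (im_sq_mul_rpow_le_vortexKernel_add hq.1)).trans ?_
  rw [lintegral_add_left (measurable_vortexKernel q), show 64 * Real.pi = 2 * Real.pi * 32 by ring]
  gcongr
  exact setLIntegral_unit_ball_const_mul_norm_rpow_le (by norm_num) hq.2.le

end VortexKernel

section VortexEnergy

variable {q R : ℝ}

lemma gagliardoEnergy_normalize_ball_eq (q R : ℝ) :
    gagliardoEnergy q u⋆ (ball (0 : ℂ) R) = ∫⁻ x : ℂ in ball 0 R, ENNReal.ofReal (‖x‖ ^ (2 - q)) *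
      ∫⁻ h in {h : ℂ | x * (1 + h) ∈ ball 0 R}, vortexKernel q h := by
  refine lintegral_congr_ae (ae_restrict_of_ae ?_)
  filter_upwards [Measure.ae_ne volume 0] with x hx
  exact setLIntegral_ball_gagliardo_integrand hx q R

lemma setLIntegral_ball_norm_rpow_mul_const (hq : q < 4) (hR : 0 ≤ R) (c : ℝ) :
    ∫⁻ x : ℂ in ball 0 R, ENNReal.ofReal (‖x‖ ^ (2 - q)) * ENNReal.ofReal c =
      ENNReal.ofReal (2 * Real.pi * (R ^ (4 - q) / (4 - q)) * c) := by
  rw [lintegral_mul_const _ (by fun_prop), setLIntegral_ball_norm_rpow (by linarith) hR,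
    show 2 - q + 2 = 4 - q by ring, ← ENNReal.ofReal_mul (by positivity)]

lemma gagliardoEnergy_normalize_ball_le (hq : q ∈ Ioo 3 4) (hR : 0 ≤ R) :
    gagliardoEnergy q u⋆ (ball (0 : ℂ) R) ≤ ENNReal.ofReal
      (2 * Real.pi * (R ^ (4 - q) / (4 - q)) * (Real.pi / (4 - q) + 72 * Real.pi)) := by
  rw [gagliardoEnergy_normalize_ball_eq, ← setLIntegral_ball_norm_rpow_mul_const hq.2 hR]
  gcongr
  exact (setLIntegral_le_lintegral _ _).trans (lintegral_vortexKernel_le hq)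

lemma le_gagliardoEnergy_normalize_ball (hq : q ∈ Ioo 3 4) (hR : 0 ≤ R) :
    ENNReal.ofReal
        (2 * Real.pi * ((R / 2) ^ (4 - q) / (4 - q)) * (Real.pi / (4 - q) - 64 * Real.pi)) ≤
      gagliardoEnergy q u⋆ (ball (0 : ℂ) R) := by
  rw [gagliardoEnergy_normalize_ball_eq,
    ← setLIntegral_ball_norm_rpow_mul_const hq.2 (by linarith)]
  refine (setLIntegral_mono' measurableSet_ball fun x hx ↦ ?_).trans
    (lintegral_mono_set (ball_subset_ball (half_le_self hR)))
  gcongr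
  refine (le_setLIntegral_unit_ball_vortexKernel hq).trans (lintegral_mono_set fun h hh ↦ ?_)
  rw [mem_ball_zero_iff] at hx hh
  have hadd : ‖1 + h‖ ≤ 2 := (norm_add_le _ _).trans (by rw [norm_one]; linarith)
  rw [mem_ofPred_eq, mem_ball_zero_iff, norm_mul]
  nlinarith [norm_nonneg x]

lemma tendsto_rpow_mul_pi_add (c : ℝ) (hR : 0 < R) :
    Tendsto (fun q ↦ 2 * Real.pi * R ^ (4 - q) * (Real.pi + (4 - q) * c)) (𝓝[<] 4)
      (𝓝 (2 * Real.pi ^ 2)) := by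
  have hpow : Continuous fun q : ℝ ↦ R ^ (4 - q) :=
    continuous_const.rpow (by fun_prop) fun _ ↦ .inl hR.ne'
  have hcont : Continuous fun q : ℝ ↦ 2 * Real.pi * R ^ (4 - q) * (Real.pi + (4 - q) * c) := by
    fun_prop
  refine tendsto_nhdsWithin_of_tendsto_nhds (hcont.tendsto' 4 _ ?_)
  rw [sub_self, Real.rpow_zero]
  ring

theorem tendsto_gagliardoEnergy_normalize_ball (hR : 0 < R) :
    Tendsto (fun q ↦ (4 - q) ^ 2 * (gagliardoEnergy q u⋆ (ball (0 : ℂ) R)).toReal) (𝓝[<] 4)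
      (𝓝 (2 * Real.pi ^ 2)) := by
  have hq : ∀ᶠ q : ℝ in 𝓝[<] 4, q ∈ Ioo 3 4 := Ioo_mem_nhdsLT (by norm_num)
  refine tendsto_of_tendsto_of_tendsto_of_le_of_le'
    (tendsto_rpow_mul_pi_add (-(64 * Real.pi)) (half_pos hR))
    (tendsto_rpow_mul_pi_add (72 * Real.pi) hR) ?_ ?_
  · filter_upwards [hq] with q hq
    have hfin := ne_top_of_le_ne_top ENNReal.ofReal_ne_top
      (gagliardoEnergy_normalize_ball_le hq hR.le)
    have hlower := (ENNReal.ofReal_le_iff_le_toReal hfin).1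
      (le_gagliardoEnergy_normalize_ball hq hR.le)
    have h4 : 0 < 4 - q := by linarith [hq.2]
    refine le_trans (le_of_eq ?_) (mul_le_mul_of_nonneg_left hlower (sq_nonneg (4 - q)))
    field_simp
    ring
  · filter_upwards [hq] with q hq
    have h4 : 0 < 4 - q := by linarith [hq.2]
    have hupper := ENNReal.toReal_le_of_le_ofReal (by positivity)
      (gagliardoEnergy_normalize_ball_le hq hR.le)
    refine (mul_le_mul_of_nonneg_left hupper (sq_nonneg (4 - q))).trans_eq ?_
    field_simp

end VortexEnergy

theorem stmt_11_general {E : Type*} [NormedAddCommGroup E] [InnerProductSpace ℝ E]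
    [FiniteDimensional ℝ E] [MeasurableSpace E] [BorelSpace E] (hE : finrank ℝ E = 2) {R : ℝ}
    (hR : 0 < R) :
    Tendsto (fun s : ℝ ↦ (1 - s) ^ 2 *
        (gagliardoEnergy (3 + s) u⋆ (ball (0 : E) R)).toReal)
      (𝓝[<] 1) (𝓝 (2 * Real.pi ^ 2)) := by
  let φ : ℂ ≃ₗᵢ[ℝ] E :=
    Complex.isometryOfOrthonormal ((stdOrthonormalBasis ℝ E).reindex (finCongr hE))
  have hshift : Tendsto (fun s : ℝ ↦ 3 + s) (𝓝[<] 1) (𝓝[<] 4) := by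
    refine tendsto_nhdsWithin_iff.2 ⟨?_, ?_⟩
    · exact ((continuous_const_add 3).tendsto' 1 4 (by norm_num)).mono_left nhdsWithin_le_nhds
    · filter_upwards [self_mem_nhdsWithin] with s (hs : s < 1)
      rw [mem_Iio]
      linarith
  refine ((tendsto_gagliardoEnergy_normalize_ball hR).comp hshift).congr fun s ↦ ?_
  simp only [Function.comp_apply, gagliardoEnergy_normalize_ball_congr φ]
  ring

/-- lim_{s→1⁻} (1-s)² [u_⋆]²_{H^{(1+s)/2}(D₁)} = 2π² for the planar vortex on the
unit disk D₁ ⊂ ℝ². -/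
theorem stmt_11 :
    Tendsto (fun s : ℝ => (1 - s) ^ 2 *
        (∫⁻ x in ball (0 : EuclideanSpace ℝ (Fin 2)) 1,
          ∫⁻ y in ball (0 : EuclideanSpace ℝ (Fin 2)) 1,
            ENNReal.ofReal (‖vortex2 x - vortex2 y‖ ^ 2 / dist x y ^ (3 + s))).toReal)
      (nhdsWithin 1 (Iio 1)) (nhds (2 * Real.pi ^ 2)) :=
  stmt_11_general finrank_euclideanSpace_fin one_pos
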